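/- Let d ≥ 1 and m ≥ 1, and consider 2m stationary point entities (radius ρ = 0) in ℝ^d such that for each 1 ≤ i ≤ m the two entities of pair i (entities numbered 2i−1 and 2i) are at distance 4i − 1 from each other. Then for every query schedule whose uncertainty degree is at most 1 at every time of a bounded interval I: each of the two entities of pair i has a query time in every sub-interval (s, s + (4i−1)] contained in I, and consequently the total number of queries during I is at least Σ_{i=1}^m 2·⌊|I|/(4i−1)⌋. -/

import Mathlib

open Metric Set
open scoped ENNReal

open Classical in
/-- The uncertainty region at time `t` of a stationary entity of radius `ρ` centered at `z`
with query-time set `Q`: the closed ball about `z` of radius `ρ + (t - p(t))` where `p(t)` is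
the last query time at or before `t`, and all of space if there is no query time before `t`. -/
noncomputable def uRegion {d : ℕ} (ρ : ℝ) (z : EuclideanSpace ℝ (Fin d))
    (Q : Set ℝ) (t : ℝ) : Set (EuclideanSpace ℝ (Fin d)) :=
  if (Q ∩ Set.Iic t).Nonempty then
    closedBall z (ρ + (t - sSup (Q ∩ Set.Iic t)))
  else Set.univ

/-!
If an entity is not queried during `(s, s + δ]`, its uncertainty region at time `s + δ` contains the
ball of radius `ρ + δ` about its center, so it meets the region of every entity at distance at most
`2 * ρ + δ`. Uncertainty degree one therefore forces a query in each such window, and an interval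
`[a, b]` contains `⌊(b - a) / δ⌋` consecutive disjoint windows.
-/

section Regions

variable {d : ℕ} {ρ s t : ℝ} {z w : EuclideanSpace ℝ (Fin d)} {Q R : Set ℝ}

theorem closedBall_subset_uRegion_of_disjoint_Ioc (hQ : Disjoint Q (Ioc s t)) :
    closedBall z (ρ + (t - s)) ⊆ uRegion ρ z Q t := by
  unfold uRegion
  split_ifs with hne
  · have last_query_le : sSup (Q ∩ Iic t) ≤ s :=
      csSup_le hne fun q ⟨hqQ, hqt⟩ =>
        le_of_not_gt fun hsq => hQ.notMem_of_mem_left hqQ ⟨hsq, hqt⟩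
    exact closedBall_subset_closedBall (by linarith)
  · exact subset_univ _

theorem closedBall_subset_uRegion : closedBall z ρ ⊆ uRegion ρ z Q t := by
  simpa using closedBall_subset_uRegion_of_disjoint_Ioc (ρ := ρ) (z := z) (Q := Q) (s := t) (t := t)

theorem uRegion_inter_uRegion_nonempty (hρ : 0 ≤ ρ) (hst : s ≤ t) (hQ : Disjoint Q (Ioc s t))
    (hzw : dist z w ≤ 2 * ρ + (t - s)) : (uRegion ρ z Q t ∩ uRegion ρ w R t).Nonempty := by
  obtain ⟨x, hzx, hxw⟩ : ∃ x, dist z x ≤ ρ + (t - s) ∧ dist x w ≤ ρ :=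
    exists_dist_le_le (by linarith) hρ (by linarith)
  exact ⟨x, closedBall_subset_uRegion_of_disjoint_Ioc hQ (mem_closedBall'.2 hzx),
    closedBall_subset_uRegion (mem_closedBall.2 hxw)⟩

end Regions

section Degree

variable {ι : Type*} {d : ℕ} {ρ δ s t : ℝ} {z : ι → EuclideanSpace ℝ (Fin d)} {Q : ι → Set ℝ}
  {i j : ι}

/-- The uncertainty degree of entity `i` at time `t`: the number of entities, `i` included, whose
uncertainty regions meet that of `i`. Since it is an `ncard`, it is only meaningful when finitely
many entities are counted. -/
noncomputable def uncertaintyDegree (ρ : ℝ) (z : ι → EuclideanSpace ℝ (Fin d)) (Q : ι → Set ℝ)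
    (t : ℝ) (i : ι) : ℕ :=
  {j | (uRegion ρ (z i) (Q i) t ∩ uRegion ρ (z j) (Q j) t).Nonempty}.ncard

theorem one_lt_uncertaintyDegree [Finite ι] (hρ : 0 ≤ ρ) (hij : i ≠ j)
    (h : (uRegion ρ (z i) (Q i) t ∩ uRegion ρ (z j) (Q j) t).Nonempty) :
    1 < uncertaintyDegree ρ z Q t i := by
  have center_mem : z i ∈ uRegion ρ (z i) (Q i) t :=
    closedBall_subset_uRegion (mem_closedBall_self hρ)
  exact (one_lt_ncard (toFinite _)).2 ⟨i, ⟨z i, center_mem, center_mem⟩, j, h, hij⟩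

theorem query_inter_Ioc_nonempty [Finite ι] (hρ : 0 ≤ ρ) (hδ : 0 ≤ δ) (hij : i ≠ j)
    (hdist : dist (z i) (z j) ≤ 2 * ρ + δ) (hdeg : uncertaintyDegree ρ z Q (s + δ) i ≤ 1) :
    (Q i ∩ Ioc s (s + δ)).Nonempty := by
  by_contra hne
  have hQ : Disjoint (Q i) (Ioc s (s + δ)) :=
    disjoint_iff_inter_eq_empty.2 (not_nonempty_iff_eq_empty.1 hne)
  exact hdeg.not_gt <| one_lt_uncertaintyDegree hρ hij <|
    uRegion_inter_uRegion_nonempty hρ (by linarith) hQ (by linarith)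

end Degree

section Counting

variable {K : Type*} [Field K] [LinearOrder K] [IsStrictOrderedRing K] [FloorSemiring K]
  {a b δ : K}

theorem Ioc_add_mul_subset_Icc (hδ : 0 < δ) {j : ℕ} (hj : j < ⌊(b - a) / δ⌋₊) :
    Ioc (a + j * δ) (a + j * δ + δ) ⊆ Icc a b := by
  have start_nonneg : 0 ≤ j * δ := by positivity
  have stop_le : (j + 1) * δ ≤ b - a := by
    rw [← le_div_iff₀ hδ]
    exact_mod_cast (Nat.le_floor_iff' j.succ_ne_zero).1 hj
  exact fun x ⟨hx, hx'⟩ => ⟨by linarith, by linarith⟩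

theorem natFloor_div_le_encard_inter_Icc {T : Set K} (hδ : 0 < δ)
    (hT : ∀ s, Ioc s (s + δ) ⊆ Icc a b → (T ∩ Ioc s (s + δ)).Nonempty) :
    (⌊(b - a) / δ⌋₊ : ℕ∞) ≤ (T ∩ Icc a b).encard := by
  have window_subset (j : Fin ⌊(b - a) / δ⌋₊) := Ioc_add_mul_subset_Icc hδ j.is_lt
  choose q hqT hq using fun j => hT _ (window_subset j)
  have q_strictMono : StrictMono q := fun j k hjk => by
    have hjk' : ((j : ℕ) + 1 : K) * δ ≤ (k : ℕ) * δ := by gcongr; exact_mod_cast hjk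
    linarith [(hq j).2, (hq k).1]
  have range_subset : range q ⊆ T ∩ Icc a b :=
    range_subset_iff.2 fun j => ⟨hqT j, window_subset j (hq j)⟩
  calc (⌊(b - a) / δ⌋₊ : ℕ∞) = (range q).encard := by
        rw [← image_univ, q_strictMono.injective.encard_image, encard_univ]
        simp
    _ ≤ (T ∩ Icc a b).encard := encard_le_encard range_subset

end Counting

theorem stmt17_general {ι : Type*} [Fintype ι] {d : ℕ} {ρ : ℝ} (hρ : 0 ≤ ρ)
    {z : ι → Fin 2 → EuclideanSpace ℝ (Fin d)} {δ : ι → ℝ} (hδ : ∀ i, 0 < δ i)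
    (hpair : ∀ i, dist (z i 0) (z i 1) ≤ 2 * ρ + δ i) {Q : ι → Fin 2 → Set ℝ} {a b : ℝ}
    (hdeg : ∀ t ∈ Icc a b, ∀ i k,
      uncertaintyDegree ρ (Function.uncurry z) (Function.uncurry Q) t (i, k) ≤ 1) :
    (∀ i k s, Ioc s (s + δ i) ⊆ Icc a b → (Q i k ∩ Ioc s (s + δ i)).Nonempty) ∧
      ∑ i, (2 * ⌊(b - a) / δ i⌋₊ : ℕ∞) ≤ ∑ i, ∑ k, (Q i k ∩ Icc a b).encard := by
  have dist_partner (i : ι) (k : Fin 2) : dist (z i k) (z i k.rev) ≤ 2 * ρ + δ i := by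
    fin_cases k
    · exact hpair i
    · exact (dist_comm _ _).trans_le (hpair i)
  have query_mem (i : ι) (k : Fin 2) (s : ℝ) (hs : Ioc s (s + δ i) ⊆ Icc a b) :
      (Q i k ∩ Ioc s (s + δ i)).Nonempty := by
    have ne_partner : (i, k) ≠ (i, k.rev) := by
      simpa using (by decide : ∀ k : Fin 2, k ≠ k.rev) k
    have stop_mem : s + δ i ∈ Icc a b := hs (right_mem_Ioc.2 (by linarith [hδ i]))
    exact query_inter_Ioc_nonempty (z := Function.uncurry z) (Q := Function.uncurry Q) hρ (hδ i).le
      ne_partner (dist_partner i k) (hdeg _ stop_mem i k)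
  refine ⟨query_mem, Finset.sum_le_sum fun i _ => ?_⟩
  rw [Fin.sum_univ_two, two_mul]
  exact add_le_add (natFloor_div_le_encard_inter_Icc (hδ i) (query_mem i 0))
    (natFloor_div_le_encard_inter_Icc (hδ i) (query_mem i 1))

theorem stmt17 (d m : ℕ) (hd : 1 ≤ d) (hm : 1 ≤ m)
    (z : Fin m → Fin 2 → EuclideanSpace ℝ (Fin d))
    (hpair : ∀ i : Fin m, dist (z i 0) (z i 1) = 4 * ((i : ℕ) + 1 : ℝ) - 1)
    (Q : Fin m → Fin 2 → Set ℝ) (a b : ℝ) (hab : a ≤ b)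
    (hdeg : ∀ t ∈ Set.Icc a b, ∀ (i : Fin m) (k : Fin 2),
      {p : Fin m × Fin 2 |
          (uRegion 0 (z i k) (Q i k) t ∩
            uRegion 0 (z p.1 p.2) (Q p.1 p.2) t).Nonempty}.ncard ≤ 1) :
    (∀ (i : Fin m) (k : Fin 2) (s : ℝ),
        Set.Ioc s (s + (4 * ((i : ℕ) + 1 : ℝ) - 1)) ⊆ Set.Icc a b →
        (Q i k ∩ Set.Ioc s (s + (4 * ((i : ℕ) + 1 : ℝ) - 1))).Nonempty) ∧
      ((∑ i : Fin m, (2 * ⌊(b - a) / (4 * ((i : ℕ) + 1 : ℝ) - 1)⌋₊ : ℕ∞)) ≤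
        ∑ i : Fin m, ∑ k : Fin 2, (Q i k ∩ Set.Icc a b).encard) :=
  stmt17_general le_rfl (fun i => by linarith [(i : ℕ).cast_nonneg (α := ℝ)])
    (fun i => by linarith [hpair i]) hdeg
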